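/- arXiv:math/0509148 — 3 statements merged into one kernel-verified Lean document; each statement's English description precedes it below -/
import Mathlib

section
/- Let F be a field and let R be a nonzero finite-dimensional F-algebra. Then R is not a commutator ring; that is, there exists an element of R that is not a sum of commutators [x,y] = xy - yx of elements of R. -/
/-- `a` is a (finite) sum of additive commutators `x*y - y*x` of elements of the ring. -/
def IsSumOfCommutators {A : Type*} [Ring A] (a : A) : Prop :=
  ∃ (n : ℕ) (x y : Fin n → A), a = ∑ i, (x i * y i - y i * x i)

/-!
Being a commutator ring passes to quotients and to base changes. A nonzero module-finite algebra
over a commutative ring has a nonzero fibre over some residue field, hence over the algebraic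
closure of that field; there Artin–Wedderburn maps it onto a matrix ring of positive size.
A matrix ring is not a commutator ring, because the trace is surjective and kills commutators.
-/

open scoped TensorProduct

/-- A ring is a commutator ring if each of its elements is a finite sum of commutators. -/
def IsCommutatorRing (A : Type*) [Ring A] : Prop :=
  ∀ a : A, IsSumOfCommutators a

namespace IsSumOfCommutators

variable {A : Type*} [Ring A]

theorem zero : IsSumOfCommutators (0 : A) :=
  ⟨0, 0, 0, by simp⟩

theorem add {a b : A} (ha : IsSumOfCommutators a) (hb : IsSumOfCommutators b) :
    IsSumOfCommutators (a + b) := by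
  obtain ⟨m, x, y, rfl⟩ := ha
  obtain ⟨n, z, w, rfl⟩ := hb
  exact ⟨m + n, Fin.append x z, Fin.append y w, by
    simp only [Fin.sum_univ_add, Fin.append_left, Fin.append_right]⟩

theorem map {B : Type*} [Ring B] (f : A →+* B) {a : A} (ha : IsSumOfCommutators a) :
    IsSumOfCommutators (f a) := by
  obtain ⟨n, x, y, rfl⟩ := ha
  exact ⟨n, f ∘ x, f ∘ y, by simp⟩

theorem tmul {K S : Type*} [CommRing K] [Ring S] [Algebra K S] [Algebra K A]
    (s : S) {a : A} (ha : IsSumOfCommutators a) : IsSumOfCommutators (s ⊗ₜ[K] a) := by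
  obtain ⟨n, x, y, rfl⟩ := ha
  refine ⟨n, fun i ↦ s ⊗ₜ x i, fun i ↦ 1 ⊗ₜ y i, ?_⟩
  simp [TensorProduct.tmul_sum, TensorProduct.tmul_sub]

theorem map_eq_zero {M : Type*} [AddCommGroup M] (t : A →+ M)
    (ht : ∀ x y, t (x * y) = t (y * x)) {a : A} (ha : IsSumOfCommutators a) : t a = 0 := by
  obtain ⟨n, x, y, rfl⟩ := ha
  simp [ht]

end IsSumOfCommutators

namespace IsCommutatorRing

variable {A : Type*} [Ring A]

theorem of_surjective {B : Type*} [Ring B] (hA : IsCommutatorRing A) (f : A →+* B)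
    (hf : Function.Surjective f) : IsCommutatorRing B :=
  hf.forall.mpr fun a ↦ (hA a).map f

theorem tensorProduct (K S : Type*) [CommRing K] [Ring S] [Algebra K S] [Algebra K A]
    (hA : IsCommutatorRing A) : IsCommutatorRing (S ⊗[K] A) := fun z ↦ by
  induction z using TensorProduct.induction_on with
  | zero => exact .zero
  | tmul s a => exact (hA a).tmul s
  | add z w hz hw => exact hz.add hw

end IsCommutatorRing

theorem not_isCommutatorRing_matrix (ι K : Type*) [Fintype ι] [DecidableEq ι] [Nonempty ι]
    [CommRing K] [Nontrivial K] : ¬ IsCommutatorRing (Matrix ι ι K) := fun h ↦ by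
  obtain ⟨m, hm⟩ := Matrix.trace_surjective (n := ι) (1 : K)
  have trace_eq_zero : m.trace = 0 :=
    (h m).map_eq_zero (Matrix.traceAddMonoidHom ι K) Matrix.trace_mul_comm
  exact one_ne_zero (hm.symm.trans trace_eq_zero)

section IsAlgClosed

variable (K A : Type*) [Field K] [IsAlgClosed K] [Ring A] [Nontrivial A] [Algebra K A]
  [FiniteDimensional K A]

theorem exists_surjective_algHom_matrix_of_isSemisimpleRing [IsSemisimpleRing A] :
    ∃ (d : ℕ) (_ : NeZero d) (f : A →ₐ[K] Matrix (Fin d) (Fin d) K), Function.Surjective f := by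
  obtain ⟨n, d, hd, ⟨e⟩⟩ := IsSemisimpleRing.exists_algEquiv_pi_matrix_of_isAlgClosed K A
  obtain ⟨i⟩ : Nonempty (Fin n) := by
    by_contra! _
    exact not_subsingleton A e.toEquiv.subsingleton
  exact ⟨d i, hd i, (Pi.evalAlgHom K _ i).comp e.toAlgHom,
    (Function.surjective_eval i).comp e.surjective⟩

theorem exists_surjective_algHom_matrix :
    ∃ (d : ℕ) (_ : NeZero d) (f : A →ₐ[K] Matrix (Fin d) (Fin d) K), Function.Surjective f := by
  have : IsArtinianRing A := .of_finite K A
  let π := Ideal.Quotient.mkₐ K (Ring.jacobson A)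
  have hπ : Function.Surjective π := Ideal.Quotient.mkₐ_surjective K _
  have : Nontrivial (A ⧸ Ring.jacobson A) :=
    Ideal.Quotient.nontrivial_iff.mpr (Ring.jacobson_lt_top A).ne
  have : FiniteDimensional K (A ⧸ Ring.jacobson A) := .of_surjective π.toLinearMap hπ
  obtain ⟨d, hd, f, hf⟩ :=
    exists_surjective_algHom_matrix_of_isSemisimpleRing K (A ⧸ Ring.jacobson A)
  exact ⟨d, hd, f.comp π, hf.comp hπ⟩

end IsAlgClosed

theorem not_isCommutatorRing_of_isAlgClosed (K A : Type*) [Field K] [IsAlgClosed K] [Ring A]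
    [Nontrivial A] [Algebra K A] [FiniteDimensional K A] : ¬ IsCommutatorRing A := fun h ↦ by
  obtain ⟨d, _, f, hf⟩ := exists_surjective_algHom_matrix K A
  exact not_isCommutatorRing_matrix (Fin d) K (h.of_surjective f.toRingHom hf)

theorem exists_nontrivial_residueField_tensorProduct (K M : Type*) [CommRing K] [AddCommGroup M]
    [Nontrivial M] [Module K M] [Module.Finite K M] :
    ∃ p : PrimeSpectrum K, Nontrivial (p.asIdeal.ResidueField ⊗[K] M) := by
  obtain ⟨p, hp⟩ := Module.nonempty_support_of_nontrivial (R := K) (M := M)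
  exact ⟨p, (Module.mem_support_iff_nontrivial_residueField_tensorProduct p).mp hp⟩

theorem stmt_2_general (K : Type*) [CommRing K] (R : Type*) [Ring R] [Nontrivial R]
    [Algebra K R] [Module.Finite K R] :
    ∃ r : R, ¬ IsSumOfCommutators r := by
  obtain ⟨p, _⟩ := exists_nontrivial_residueField_tensorProduct K R
  let k := p.asIdeal.ResidueField
  refine not_forall.mp fun h : IsCommutatorRing R ↦ ?_
  exact not_isCommutatorRing_of_isAlgClosed (AlgebraicClosure k) _
    ((h.tensorProduct K k).tensorProduct k (AlgebraicClosure k))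

/-- A nonzero finite-dimensional algebra over a field is not a commutator ring. -/
theorem stmt_2 (F : Type*) [Field F] (R : Type*) [Ring R] [Nontrivial R]
    [Algebra F R] [FiniteDimensional F R] :
    ∃ r : R, ¬ IsSumOfCommutators r :=
  stmt_2_general F R
end

section
/- Let R be a ring, r an element of R, n a positive integer, and m_1, ..., m_n natural numbers. Suppose e_1, ..., e_n are pairwise orthogonal idempotents of R with e_1 + e_2 + ... + e_n = 1, and for each i the element e_i r e_i can be written as a sum of m_i commutators [e_i x e_i, e_i y e_i] of elements of the corner ring e_i R e_i. Then r can be written as a sum of max(m_1, ..., m_n) + n - 1 commutators of elements of R. -/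
/-- `a` is a sum of `k` additive commutators `x*y - y*x` of elements of the ring. -/
def IsSumOfNCommutators {A : Type*} [Ring A] (k : ℕ) (a : A) : Prop :=
  ∃ x y : Fin k → A, a = ∑ i, (x i * y i - y i * x i)

/-!
Write `r` in its Peirce decomposition. The diagonal part `∑ i, e i * r * e i` lies in the image of
the product of the corner rings, in which commutators are formed coordinatewise; padding with zero
commutators makes all coordinates use the same number, namely the maximum of the `m i`.
The off-diagonal part is removed by splitting off one idempotent at a time: if `e * f = f * e = 0`,
then `e * r * f + f * r * e` is the single commutator of `e` and `e * r * f - f * r * e`.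
-/

namespace IsSumOfNCommutators

variable {A B : Type*} [Ring A] [Ring B] {k l : ℕ} {a b : A}

theorem zero (k : ℕ) : IsSumOfNCommutators k (0 : A) :=
  ⟨0, 0, by simp⟩

theorem add (ha : IsSumOfNCommutators k a) (hb : IsSumOfNCommutators l b) :
    IsSumOfNCommutators (k + l) (a + b) := by
  obtain ⟨x, y, rfl⟩ := ha
  obtain ⟨z, w, rfl⟩ := hb
  refine ⟨Fin.append x z, Fin.append y w, ?_⟩
  simp only [Fin.sum_univ_add, Fin.append_left, Fin.append_right]

theorem mono (hkl : k ≤ l) (ha : IsSumOfNCommutators k a) : IsSumOfNCommutators l a := by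
  simpa only [Nat.add_sub_cancel' hkl, add_zero] using ha.add (zero (l - k))

theorem map (f : A →ₙ+* B) (ha : IsSumOfNCommutators k a) : IsSumOfNCommutators k (f a) := by
  obtain ⟨x, y, rfl⟩ := ha
  exact ⟨f ∘ x, f ∘ y, by simp only [map_sum, map_sub, map_mul, Function.comp_apply]⟩

theorem pi {ι : Type*} {A : ι → Type*} [∀ i, Ring (A i)] {a : ∀ i, A i}
    (ha : ∀ i, IsSumOfNCommutators k (a i)) : IsSumOfNCommutators k a := by
  choose x y hxy using ha
  refine ⟨fun j i ↦ x i j, fun j i ↦ y i j, funext fun i ↦ ?_⟩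
  simp only [hxy, Finset.sum_apply, Pi.sub_apply, Pi.mul_apply]

end IsSumOfNCommutators

/-- The Peirce component `e * r * e` of `r`, as an element of the corner ring of `e`. -/
def toCorner {R : Type*} [Semigroup R] {e : R} (he : IsIdempotentElem e) (r : R) : he.Corner :=
  ⟨e * r * e, r, rfl⟩

theorem toCorner_surjective {R : Type*} [Semigroup R] {e : R} (he : IsIdempotentElem e) :
    Function.Surjective (toCorner he) :=
  fun ⟨_, x, hx⟩ ↦ ⟨x, Subtype.ext hx⟩

theorem isSumOfNCommutators_corner_iff {R : Type*} [Ring R] {e : R} {he : IsIdempotentElem e}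
    {k : ℕ} {a : he.Corner} :
    IsSumOfNCommutators k a ↔ ∃ x y : Fin k → R, a.1 =
      ∑ j, ((e * x j * e) * (e * y j * e) - (e * y j * e) * (e * x j * e)) := by
  have coe_sum (x y : Fin k → R) :
      (∑ j, (toCorner he (x j) * toCorner he (y j) - toCorner he (y j) * toCorner he (x j))).1 =
        ∑ j, ((e * x j * e) * (e * y j * e) - (e * y j * e) * (e * x j * e)) :=
    map_sum (NonUnitalRing.corner e).subtype _ Finset.univ
  have surj : Function.Surjective fun x : Fin k → R ↦ toCorner he ∘ x :=
    (toCorner_surjective he).comp_left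
  simp only [IsSumOfNCommutators, surj.exists, Function.comp_apply, ← coe_sum]
  exact exists₂_congr fun _ _ ↦ Subtype.ext_iff

/-- The embedding of the product of the corner rings of orthogonal idempotents as the
block-diagonal elements. It is only non-unital, as `1` is sent to `∑ i, e i`. -/
def cornerSumHom {R ι : Type*} [Semiring R] [Fintype ι] {e : ι → R}
    (he : OrthogonalIdempotents e) : (∀ i, (he.idem i).Corner) →ₙ+* R where
  toFun x := ∑ i, (x i).1
  map_zero' := Finset.sum_eq_zero fun _ _ ↦ rfl
  map_add' _ _ := Finset.sum_add_distrib
  map_mul' x y := by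
    have mul_eq_zero {i j : ι} (hij : j ≠ i) : (x i).1 * (y j).1 = 0 := by
      rw [← ((Subsemigroup.mem_corner_iff (he.idem i)).mp (x i).2).2,
        ← ((Subsemigroup.mem_corner_iff (he.idem j)).mp (y j).2).1,
        mul_assoc, ← mul_assoc (e i), he.ortho hij.symm, zero_mul, mul_zero]
    rw [Finset.sum_mul_sum]
    refine Finset.sum_congr rfl fun i _ ↦ (?_ : (x i).1 * (y i).1 = _)
    exact (Finset.sum_eq_single_of_mem i (Finset.mem_univ i) fun _ _ ↦ mul_eq_zero).symm

section Peirce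

variable {R ι : Type*} [Ring R] {e : ι → R}

theorem isSumOfNCommutators_sum_corner [Fintype ι] (he : OrthogonalIdempotents e) {k : ℕ}
    {a : ∀ i, (he.idem i).Corner} (ha : ∀ i, IsSumOfNCommutators k (a i)) :
    IsSumOfNCommutators k (∑ i, (a i).1) :=
  (IsSumOfNCommutators.pi ha).map (cornerSumHom he)

theorem isSumOfNCommutators_one_offDiag {e f : R} (he : IsIdempotentElem e)
    (hef : e * f = 0) (hfe : f * e = 0) (r : R) :
    IsSumOfNCommutators 1 (e * r * f + f * r * e) := by
  refine ⟨fun _ ↦ e, fun _ ↦ e * r * f - f * r * e, ?_⟩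
  have left_mul : e * (e * r * f - f * r * e) = e * r * f := by
    simp only [mul_sub, ← mul_assoc, he.eq, hef, zero_mul, sub_zero]
  have mul_right : (e * r * f - f * r * e) * e = -(f * r * e) := by
    simp only [sub_mul, mul_assoc, he.eq, hfe, mul_zero, zero_sub]
  rw [Fin.sum_univ_one, left_mul, mul_right, sub_neg_eq_add]

theorem isSumOfNCommutators_sum_offDiag (he : OrthogonalIdempotents e) (r : R)
    {s : Finset ι} (hs : s.Nonempty) :
    IsSumOfNCommutators (s.card - 1)
      ((∑ i ∈ s, e i) * r * (∑ i ∈ s, e i) - ∑ i ∈ s, e i * r * e i) := by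
  induction hs using Finset.Nonempty.cons_induction with
  | singleton i => simpa using IsSumOfNCommutators.zero 0
  | cons i s hi hs ih =>
    set f := ∑ j ∈ s, e j
    have e_mul_f : e i * f = 0 := he.mul_sum_of_notMem hi
    have f_mul_e : f * e i = 0 := by
      rw [Finset.sum_mul]
      exact Finset.sum_eq_zero fun j hj ↦ he.ortho (ne_of_mem_of_not_mem hj hi)
    have split : (e i + f) * r * (e i + f) - (e i * r * e i + ∑ j ∈ s, e j * r * e j) =
        (f * r * f - ∑ j ∈ s, e j * r * e j) + (e i * r * f + f * r * e i) := by
      noncomm_ring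
    rw [Finset.sum_cons, Finset.sum_cons, split, Finset.card_cons,
      Nat.sub_add_comm hs.card_pos]
    exact ih.add (isSumOfNCommutators_one_offDiag (he.idem i) e_mul_f f_mul_e r)

end Peirce

/-- If `e 1, ..., e n` are orthogonal idempotents summing to `1` and each `e i * r * e i`
is a sum of `m i` commutators in the corner `e i * R * e i`, then `r` is a sum of
`max (m 1, ..., m n) + n - 1` commutators in `R`. -/
theorem stmt_4 {R : Type*} [Ring R] (r : R) (n : ℕ) (hn : 0 < n)
    (e : Fin n → R) (m : Fin n → ℕ)
    (hidem : ∀ i, e i * e i = e i)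
    (horth : ∀ i j, i ≠ j → e i * e j = 0)
    (hsum : ∑ i, e i = 1)
    (h : ∀ i, ∃ x y : Fin (m i) → R, e i * r * e i =
      ∑ j, ((e i * x j * e i) * (e i * y j * e i) - (e i * y j * e i) * (e i * x j * e i))) :
    IsSumOfNCommutators (Finset.univ.sup m + n - 1) r := by
  have he : OrthogonalIdempotents e := ⟨hidem, horth⟩
  have diag : IsSumOfNCommutators (Finset.univ.sup m) (∑ i, e i * r * e i) :=
    isSumOfNCommutators_sum_corner he (a := fun i ↦ toCorner (he.idem i) r) fun i ↦
      (isSumOfNCommutators_corner_iff.mpr (h i)).mono (Finset.le_sup (Finset.mem_univ i))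
  have offDiag : IsSumOfNCommutators (n - 1) (r - ∑ i, e i * r * e i) := by
    have : Nonempty (Fin n) := ⟨⟨0, hn⟩⟩
    simpa only [hsum, one_mul, mul_one, Finset.card_univ, Fintype.card_fin] using
      isSumOfNCommutators_sum_offDiag he r Finset.univ_nonempty
  rw [Nat.add_sub_assoc hn, ← add_sub_cancel (∑ i, e i * r * e i) r]
  exact diag.add offDiag
end

section
/- Let R be a ring and M a right R-module. The following are equivalent: (1) there exists a right R-module N such that M is isomorphic to the direct sum ⨁_{i ∈ ℕ} N of countably infinitely many copies of N; (2) there exist endomorphisms x, z in End_R(M) such that z ∘ x is the identity on M and every element of M is annihilated by some power of z (i.e., the union over i ≥ 1 of the kernels of z^i is all of M). -/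
universe u v

/-!
If `z * x = 1`, then `1 - x * z` is a projection onto `ker z`, so `m = (m - x (z m)) + x (z m)`
peels off a component in `ker z` and leaves `x` applied to `z m`. Iterating, the process stops
exactly when `z` is locally nilpotent, and `M = ⨁ i, x ^ i (ker z)` with each summand isomorphic to
`ker z`. Conversely, the right and left shifts are such a pair on `ℕ →₀ N`.
-/

section IsShiftPair

variable {S M N : Type*} [Semiring S] [AddCommMonoid M] [Module S M] [AddCommMonoid N] [Module S N]

/-- A pair of endomorphisms `x, z` behaving like the right and left shifts of a direct sum of
countably many copies of a module: `z` is a left inverse of `x` and is locally nilpotent. -/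
structure IsShiftPair (x z : Module.End S M) : Prop where
  mul_eq_one : z * x = 1
  exists_pow_apply_eq_zero : ∀ m, ∃ i, (z ^ i) m = 0

theorem isShiftPair_iff_exists_one_le {x z : Module.End S M} :
    IsShiftPair x z ↔ z * x = 1 ∧ ∀ m, ∃ i, 1 ≤ i ∧ (z ^ i) m = 0 := by
  refine ⟨fun h ↦ ⟨h.mul_eq_one, fun m ↦ ?_⟩, fun h ↦ ⟨h.1, fun m ↦ (h.2 m).imp fun _ ↦ And.right⟩⟩
  obtain ⟨i, hi⟩ := h.exists_pow_apply_eq_zero m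
  exact ⟨i + 1, i.succ_pos, Module.End.pow_map_zero_of_le i.le_succ hi⟩

theorem IsShiftPair.conj {x z : Module.End S M} (h : IsShiftPair x z) (e : M ≃ₗ[S] N) :
    IsShiftPair (e.conjRingEquiv x) (e.conjRingEquiv z) where
  mul_eq_one := by rw [← map_mul, h.mul_eq_one, map_one]
  exists_pow_apply_eq_zero n := by
    obtain ⟨i, hi⟩ := h.exists_pow_apply_eq_zero (e.symm n)
    exact ⟨i, by rw [← map_pow, LinearEquiv.conjRingEquiv_apply_apply, hi, map_zero]⟩

end IsShiftPair

section Shift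

variable (S N : Type*) [Semiring S] [AddCommMonoid N] [Module S N]

/-- The right shift `(n₀, n₁, …) ↦ (0, n₀, n₁, …)` on finitely supported sequences. -/
noncomputable def rightShift : Module.End S (ℕ →₀ N) :=
  Finsupp.lmapDomain N S Nat.succ

/-- The left shift `(n₀, n₁, …) ↦ (n₁, n₂, …)` on finitely supported sequences. -/
noncomputable def leftShift : Module.End S (ℕ →₀ N) :=
  Finsupp.lcomapDomain Nat.succ Nat.succ_injective

variable {N}

theorem rightShift_single (i : ℕ) (n : N) :
    rightShift S N (Finsupp.single i n) = Finsupp.single (i + 1) n :=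
  Finsupp.mapDomain_single

theorem rightShift_apply_zero (f : ℕ →₀ N) : rightShift S N f 0 = 0 :=
  Finsupp.mapDomain_of_notMem_range f 0 (by simp)

theorem rightShift_apply_succ (f : ℕ →₀ N) (j : ℕ) : rightShift S N f (j + 1) = f j :=
  Finsupp.mapDomain_apply Nat.succ_injective f j

theorem leftShift_apply (f : ℕ →₀ N) (j : ℕ) : leftShift S N f j = f (j + 1) :=
  rfl

theorem leftShift_pow_apply (i : ℕ) (f : ℕ →₀ N) (j : ℕ) :
    (leftShift S N ^ i) f j = f (j + i) := by
  induction i generalizing j with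
  | zero => rfl
  | succ i ih =>
    rw [pow_succ', Module.End.mul_apply, leftShift_apply, ih, add_right_comm, add_assoc]

theorem single_zero_add_rightShift_leftShift (f : ℕ →₀ N) :
    Finsupp.single 0 (f 0) + rightShift S N (leftShift S N f) = f := by
  ext (_ | j)
  · simp [rightShift_apply_zero]
  · simp [rightShift_apply_succ, leftShift_apply]

variable (N) in
theorem isShiftPair_rightShift_leftShift : IsShiftPair (rightShift S N) (leftShift S N) where
  mul_eq_one := LinearMap.ext fun f ↦ Finsupp.ext (rightShift_apply_succ S f)
  exists_pow_apply_eq_zero f := by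
    obtain ⟨i, hi⟩ := f.support.exists_nat_subset_range
    refine ⟨i, Finsupp.ext fun j ↦ ?_⟩
    have hj : j + i ∉ f.support := fun h ↦ by simpa using hi h
    rw [leftShift_pow_apply, Finsupp.notMem_support_iff.mp hj, Finsupp.zero_apply]

end Shift

section PowSum

variable {S M N : Type*} [Semiring S] [AddCommMonoid N] [Module S N]

section AddCommMonoid

variable [AddCommMonoid M] [Module S M]

/-- The map `(n₀, n₁, …) ↦ ∑ i, x ^ i (a nᵢ)` out of the direct sum of countably many copies
of `N`. -/
noncomputable def powSum (x : Module.End S M) (a : N →ₗ[S] M) : (ℕ →₀ N) →ₗ[S] M :=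
  Finsupp.lsum ℕ fun i ↦ (x ^ i) ∘ₗ a

variable (x : Module.End S M) (a : N →ₗ[S] M)

theorem powSum_single (i : ℕ) (n : N) : powSum x a (Finsupp.single i n) = (x ^ i) (a n) := by
  simp [powSum]

theorem powSum_rightShift (f : ℕ →₀ N) :
    powSum x a (rightShift S N f) = x (powSum x a f) := by
  suffices powSum x a ∘ₗ rightShift S N = x ∘ₗ powSum x a from LinearMap.congr_fun this f
  refine Finsupp.lhom_ext fun i n ↦ ?_
  simp only [LinearMap.comp_apply, rightShift_single, powSum_single, pow_succ',
    Module.End.mul_apply]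

theorem powSum_eq_add_leftShift (f : ℕ →₀ N) :
    powSum x a f = a (f 0) + x (powSum x a (leftShift S N f)) := by
  conv_lhs => rw [← single_zero_add_rightShift_leftShift S f]
  rw [map_add, powSum_single, powSum_rightShift, pow_zero, Module.End.one_apply]

variable {x a} {z : Module.End S M}

theorem powSum_leftShift_pow (hzx : z * x = 1) (hza : z ∘ₗ a = 0) (j : ℕ) (f : ℕ →₀ N) :
    powSum x a ((leftShift S N ^ j) f) = (z ^ j) (powSum x a f) := by
  have semiconj : z ∘ₗ powSum x a = powSum x a ∘ₗ leftShift S N := by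
    refine LinearMap.ext fun f ↦ ?_
    have hzx_apply (m : M) : z (x m) = m := LinearMap.congr_fun hzx m
    have hza_apply (n : N) : z (a n) = 0 := LinearMap.congr_fun hza n
    rw [LinearMap.comp_apply, powSum_eq_add_leftShift, map_add, hza_apply, hzx_apply, zero_add,
      LinearMap.comp_apply]
  exact (LinearMap.congr_fun (Module.End.commute_pow_left_of_commute semiconj j) f).symm

theorem pow_apply_powSum (hzx : z * x = 1) (hza : z ∘ₗ a = 0) (j : ℕ) (f : ℕ →₀ N) :
    (z ^ j) (powSum x a f) = a (f j) + x ((z ^ (j + 1)) (powSum x a f)) := by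
  rw [← powSum_leftShift_pow hzx hza, powSum_eq_add_leftShift, leftShift_pow_apply, zero_add,
    ← Module.End.mul_apply, ← pow_succ', powSum_leftShift_pow hzx hza]

theorem powSum_injective [IsCancelAdd M] (hzx : z * x = 1) (hza : z ∘ₗ a = 0)
    (ha : Function.Injective a) : Function.Injective (powSum x a) := by
  intro f g hfg
  refine Finsupp.ext fun j ↦ ha ?_
  have hj := pow_apply_powSum hzx hza j f
  rw [hfg, pow_apply_powSum hzx hza j g] at hj
  exact (add_right_cancel hj).symm

end AddCommMonoid

variable [AddCommGroup M] [Module S M] {x z : Module.End S M} {a : N →ₗ[S] M}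

theorem IsShiftPair.powSum_surjective (h : IsShiftPair x z)
    (ha : LinearMap.ker z ≤ LinearMap.range a) : Function.Surjective (powSum x a) := by
  suffices ∀ (i : ℕ) (m : M), (z ^ i) m = 0 → ∃ f, powSum x a f = m from
    fun m ↦ (h.exists_pow_apply_eq_zero m).elim fun i ↦ this i m
  intro i
  induction i with
  | zero => exact fun m hm ↦ ⟨0, by rw [map_zero]; exact hm.symm⟩
  | succ i ih =>
    intro m hm
    obtain ⟨f, hf⟩ := ih (z m) (by rwa [pow_succ] at hm)
    have mem_ker : m - x (z m) ∈ LinearMap.ker z := by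
      rw [LinearMap.mem_ker, map_sub, ← Module.End.mul_apply z x, h.mul_eq_one,
        Module.End.one_apply, sub_self]
    obtain ⟨n, hn⟩ := ha mem_ker
    refine ⟨Finsupp.single 0 n + rightShift S N f, ?_⟩
    rw [map_add, powSum_single, powSum_rightShift, hf, pow_zero, Module.End.one_apply, hn,
      sub_add_cancel]

theorem IsShiftPair.nonempty_linearEquiv_finsupp_ker (h : IsShiftPair x z) :
    Nonempty (M ≃ₗ[S] (ℕ →₀ LinearMap.ker z)) := by
  let a := (LinearMap.ker z).subtype
  have hinj : Function.Injective (powSum x a) :=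
    powSum_injective h.mul_eq_one (LinearMap.comp_ker_subtype z) (LinearMap.ker z).subtype_injective
  have hsurj : Function.Surjective (powSum x a) :=
    h.powSum_surjective (LinearMap.ker z).range_subtype.ge
  exact ⟨(LinearEquiv.ofBijective (powSum x a) ⟨hinj, hsurj⟩).symm⟩

end PowSum

theorem stmt_10_general {S : Type u} [Ring S] {M : Type v} [AddCommGroup M] [Module S M] :
    (∃ (N : Type v) (_ : AddCommGroup N) (_ : Module S N),
      Nonempty (M ≃ₗ[S] DirectSum ℕ fun _ : ℕ => N)) ↔
    (∃ x z : Module.End S M, z * x = 1 ∧ ∀ m : M, ∃ i : ℕ, 1 ≤ i ∧ (z ^ i) m = 0) := by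
  simp only [← isShiftPair_iff_exists_one_le]
  constructor
  · rintro ⟨N, _, _, ⟨e⟩⟩
    let e' : (ℕ →₀ N) ≃ₗ[S] M := finsuppLEquivDirectSum S N ℕ ≪≫ₗ e.symm
    exact ⟨_, _, (isShiftPair_rightShift_leftShift S N).conj e'⟩
  · rintro ⟨x, z, h⟩
    obtain ⟨e⟩ := h.nonempty_linearEquiv_finsupp_ker
    exact ⟨LinearMap.ker z, inferInstance, inferInstance,
      ⟨e ≪≫ₗ finsuppLEquivDirectSum S (LinearMap.ker z) ℕ⟩⟩

/-- A right `R`-module `M` is isomorphic to a direct sum of countably infinitely many copies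
of some module `N` if and only if there are endomorphisms `x, z` of `M` with `z ∘ x = id`
and `⋃_{i ≥ 1} ker (z^i) = M`. -/
theorem stmt_10 {R : Type u} [Ring R] {M : Type v} [AddCommGroup M] [Module Rᵐᵒᵖ M] :
    (∃ (N : Type v) (_ : AddCommGroup N) (_ : Module Rᵐᵒᵖ N),
      Nonempty (M ≃ₗ[Rᵐᵒᵖ] DirectSum ℕ fun _ : ℕ => N)) ↔
    (∃ x z : Module.End Rᵐᵒᵖ M, z * x = 1 ∧ ∀ m : M, ∃ i : ℕ, 1 ≤ i ∧ (z ^ i) m = 0) :=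
  stmt_10_general
end
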